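/- arXiv:2507.19170 — 3 statements merged into one kernel-verified Lean document; each statement's English description precedes it below -/
import Mathlib

section
/- Dynamic programming inequality: let T > 1, x ∈ X, and let γ̄ ∈ H¹([1, T]; X) satisfy γ̄(T) = x. Let T' ∈ [1, T] and let γ̃ ∈ H¹([1, T']; X) with γ̃(T') = γ̄(T') attain the infimum defining u(T', γ̄(T')). Then u(T, x) ≤ u(T', γ̄(T')) + ∫_{T'}^T L(γ̄(t), γ̄'(t)) dt − ⟨ṙ_0(T) − ṙ_0(T'), γ̃(1)⟩_M. -/
open MeasureTheory Real Set Filter Topology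
open scoped RealInnerProductSpace ENNReal

noncomputable section
namespace NBodyHJ

attribute [local instance] Classical.propDecidable

abbrev Conf (d N : ℕ) := Fin N → EuclideanSpace ℝ (Fin d)

variable {d N : ℕ}

/-- The mass inner product on the configuration space. -/
def minner (m : Fin N → ℝ) (x y : Conf d N) : ℝ := ∑ i, m i * ⟪x i, y i⟫

/-- The mass norm on the configuration space. -/
def mnorm (m : Fin N → ℝ) (x : Conf d N) : ℝ := Real.sqrt (minner m x x)

/-- Membership in the zero-barycenter configuration space `X`. -/
def inX (m : Fin N → ℝ) (x : Conf d N) : Prop := ∑ i, m i • x i = 0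

/-- Collision configurations. -/
def collision (x : Conf d N) : Prop := ∃ i j, i ≠ j ∧ x i = x j

/-- Membership in the collision-free zero-barycenter space `Ω`. -/
def inOmega (m : Fin N → ℝ) (x : Conf d N) : Prop := inX m x ∧ ¬ collision x

/-- The Newtonian potential (with junk value `0` for a colliding pair). -/
def U (m : Fin N → ℝ) (x : Conf d N) : ℝ :=
  ∑ i : Fin N, ∑ j : Fin N, if i < j then m i * m j / ‖x i - x j‖ else 0

/-- The time interval `(t₀, T)`, where `T ∈ (t₀, +∞]` is extended-real. -/
def timeSet (t0 : ℝ) (T : EReal) : Set ℝ := {t : ℝ | t0 < t ∧ (t : EReal) < T}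

/-- Membership of the pair (curve, derivative) `(φ, φ')` in `D₀^{1,2}(t₀, T)`:
`φ` starts at `0`, takes values in `X`, is the integral of `φ'` (hence locally
absolutely continuous), and `φ'` has finite `L²` mass norm on `(t₀, T)`. -/
def InD (m : Fin N → ℝ) (t0 : ℝ) (T : EReal) (φ φ' : ℝ → Conf d N) : Prop :=
  φ t0 = 0 ∧
  (∀ t : ℝ, t0 ≤ t → (t : EReal) < T → inX m (φ t)) ∧
  (∀ t : ℝ, t0 ≤ t → (t : EReal) < T → φ t = ∫ s in Set.Ioc t0 t, φ' s) ∧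
  (∀ t : ℝ, t0 ≤ t → (t : EReal) < T → IntegrableOn φ' (Set.Ioc t0 t)) ∧
  IntegrableOn (fun t => (mnorm m (φ' t)) ^ 2) (timeSet t0 T)

/-- The norm `‖φ‖_{D_T}`. -/
def Dnorm (m : Fin N → ℝ) (t0 : ℝ) (T : EReal) (φ' : ℝ → Conf d N) : ℝ :=
  Real.sqrt (∫ t in timeSet t0 T, (mnorm m (φ' t)) ^ 2)

/-- The motion `γ(t) = φ(t) + t a + x - a` associated with `φ` in the hyperbolic case. -/
def hypCurve (a x : Conf d N) (φ : ℝ → Conf d N) (t : ℝ) : Conf d N :=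
  φ t + t • a + x - a

/-- The integrand of the hyperbolic renormalized Lagrangian action. -/
def hypIntegrand (m : Fin N → ℝ) (a x : Conf d N) (φ φ' : ℝ → Conf d N) (t : ℝ) : ℝ :=
  (mnorm m (φ' t)) ^ 2 / 2 + U m (hypCurve a x φ t) - U m (t • a)

/-- The hyperbolic renormalized Lagrangian action `A_{x,[1,T]}(φ)`, with values in
`ℝ ∪ {+∞}` : it equals the integral of the renormalized Lagrangian if this integrand is
integrable and the motion is a.e. collision-free, and `+∞` otherwise. -/
def hypAction (m : Fin N → ℝ) (a x : Conf d N) (T : EReal) (φ φ' : ℝ → Conf d N) : EReal :=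
  if IntegrableOn (hypIntegrand m a x φ φ') (timeSet 1 T) ∧
      (∀ᵐ t ∂volume.restrict (timeSet 1 T), ¬ collision (hypCurve a x φ t))
  then ((∫ t in timeSet 1 T, hypIntegrand m a x φ φ' t : ℝ) : EReal)
  else (⊤ : EReal)

/-- The infimum of the hyperbolic renormalized action over `D₀^{1,2}(1,T)`. -/
def hypInf (m : Fin N → ℝ) (a x : Conf d N) (T : EReal) : EReal :=
  ⨅ (φ : ℝ → Conf d N) (φ' : ℝ → Conf d N) (_ : InD m 1 T φ φ'), hypAction m a x T φ φ'

/-- The renormalized value function `v(x)` in the hyperbolic case. -/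
def hypValue (m : Fin N → ℝ) (a x : Conf d N) : ℝ :=
  (hypInf m a x ⊤).toReal - minner m a x


/-- The Newtonian potential with values in `[0, +∞]` : it equals `+∞` exactly on the
collision set (for positive masses). -/
def Upot (m : Fin N → ℝ) (x : Conf d N) : ℝ≥0∞ :=
  ∑ i : Fin N, ∑ j : Fin N,
    if i < j then ENNReal.ofReal (m i * m j) / ENNReal.ofReal ‖x i - x j‖ else 0

/-- Membership of the pair `(η, η')` in `H¹([t₀, T]; X)` : `η` takes values in `X`, is the
integral of `η'` (hence absolutely continuous), and `η'` is in `L¹ ∩ L²` for the mass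
norm on `[t₀, T]`. -/
def InH1 (m : Fin N → ℝ) (t0 T : ℝ) (η η' : ℝ → Conf d N) : Prop :=
  (∀ t ∈ Set.Icc t0 T, inX m (η t)) ∧
  (∀ t ∈ Set.Icc t0 T, η t = η t0 + ∫ s in Set.Ioc t0 t, η' s) ∧
  IntegrableOn η' (Set.Icc t0 T) ∧
  IntegrableOn (fun t => (mnorm m (η' t)) ^ 2) (Set.Icc t0 T)

/-- The Lagrangian cost `∫_1^T L(η(t), η̇(t)) dt ∈ [0, +∞]`, where
`L(x, w) = ½‖w‖_M² + U(x)` with `U` extended by `+∞` on collisions. -/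
def lagCost (m : Fin N → ℝ) (T : ℝ) (η η' : ℝ → Conf d N) : ℝ≥0∞ :=
  ∫⁻ t in Set.Ioc 1 T, (ENNReal.ofReal ((mnorm m (η' t)) ^ 2 / 2) + Upot m (η t))

/-- The value function
`u(T, x) = inf { ∫_1^T L(η, η̇) dt − ⟨ṙ₀(T), η(1)⟩_M : η ∈ H¹([1,T]; X), η(T) = x }`,
with values in `EReal`. -/
def uVal (m : Fin N → ℝ) (r0' : ℝ → Conf d N) (T : ℝ) (x : Conf d N) : EReal :=
  ⨅ (η : ℝ → Conf d N) (η' : ℝ → Conf d N) (_ : InH1 m 1 T η η' ∧ η T = x),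
    ((lagCost m T η η' : ℝ≥0∞) : EReal) - ((minner m (r0' T) (η 1) : ℝ) : EReal)

/-- Concatenation at time `s` of the curve `f` (up to and including `s`) with the curve `g`. -/
def concat {α : Type*} (s : ℝ) (f g : ℝ → α) (t : ℝ) : α := if t ≤ s then f t else g t

theorem concat_of_le {α : Type*} {s t : ℝ} (f g : ℝ → α) (h : t ≤ s) :
    concat s f g t = f t := if_pos h

theorem concat_of_lt {α : Type*} {s t : ℝ} (f g : ℝ → α) (h : s < t) :
    concat s f g t = g t := if_neg h.not_ge

theorem integrableOn_concat {E : Type*} [NormedAddCommGroup E] {a s b : ℝ} {f g : ℝ → E}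
    (hf : IntegrableOn f (Set.Icc a s)) (hg : IntegrableOn g (Set.Icc a b)) (hs : s ∈ Set.Icc a b) :
    IntegrableOn (concat s f g) (Set.Icc a b) := by
  rw [← Set.Icc_union_Ioc_eq_Icc hs.1 hs.2]
  refine IntegrableOn.union ?_ ?_
  · exact hf.congr_fun (fun t ht => (concat_of_le f g ht.2).symm) measurableSet_Icc
  · exact (hg.mono_set (Set.Ioc_subset_Icc_self.trans (Set.Icc_subset_Icc_left hs.1))).congr_fun
      (fun t ht => (concat_of_lt f g ht.1).symm) measurableSet_Ioc

/-- The increment of an `H¹` curve over a subinterval is the integral of its derivative. -/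
theorem InH1.eq_add_integral {m : Fin N → ℝ} {a b : ℝ} {η η' : ℝ → Conf d N}
    (h : InH1 m a b η η') {s t : ℝ} (has : a ≤ s) (hst : s ≤ t) (htb : t ≤ b) :
    η t = η s + ∫ r in Set.Ioc s t, η' r := by
  have hint : IntegrableOn η' (Set.Ioc a t) :=
    h.2.2.1.mono_set (Set.Ioc_subset_Icc_self.trans (Set.Icc_subset_Icc_right htb))
  rw [h.2.1 t ⟨has.trans hst, htb⟩, h.2.1 s ⟨has, hst.trans htb⟩,
    ← Set.Ioc_union_Ioc_eq_Ioc has hst,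
    setIntegral_union (Set.Ioc_disjoint_Ioc_of_le le_rfl) measurableSet_Ioc
      (hint.mono_set (Set.Ioc_subset_Ioc_right hst))
      (hint.mono_set (Set.Ioc_subset_Ioc_left has)), add_assoc]

/-- `H¹` curves which agree at the time `s` may be concatenated there. -/
theorem InH1.concat {m : Fin N → ℝ} {a s b : ℝ} {f f' g g' : ℝ → Conf d N}
    (hf : InH1 m a s f f') (hg : InH1 m a b g g') (hs : s ∈ Set.Icc a b) (hfg : f s = g s) :
    InH1 m a b (concat s f g) (concat s f' g') := by
  have hint := integrableOn_concat hf.2.2.1 hg.2.2.1 hs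
  refine ⟨fun t ht => ?_, fun t ht => ?_, hint, ?_⟩
  · rcases le_or_gt t s with h | h
    · rw [concat_of_le f g h]
      exact hf.1 t ⟨ht.1, h⟩
    · rw [concat_of_lt f g h]
      exact hg.1 t ht
  · have hleft : ∀ t ≤ s, ∫ r in Set.Ioc a t, NBodyHJ.concat s f' g' r
        = ∫ r in Set.Ioc a t, f' r := fun t hts =>
      setIntegral_congr_fun measurableSet_Ioc fun r hr => concat_of_le f' g' (hr.2.trans hts)
    rw [concat_of_le f g hs.1]
    rcases le_or_gt t s with h | h
    · rw [concat_of_le f g h, hleft t h]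
      exact hf.2.1 t ⟨ht.1, h⟩
    · have hint' : IntegrableOn (NBodyHJ.concat s f' g') (Set.Ioc a t) :=
        hint.mono_set (Set.Ioc_subset_Icc_self.trans (Set.Icc_subset_Icc_right ht.2))
      rw [concat_of_lt f g h, ← Set.Ioc_union_Ioc_eq_Ioc hs.1 h.le,
        setIntegral_union (Set.Ioc_disjoint_Ioc_of_le le_rfl) measurableSet_Ioc
          (hint'.mono_set (Set.Ioc_subset_Ioc_right h.le))
          (hint'.mono_set (Set.Ioc_subset_Ioc_left hs.1)), hleft s le_rfl,
        setIntegral_congr_fun (f := NBodyHJ.concat s f' g') (g := g') measurableSet_Ioc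
          (fun r hr => concat_of_lt f' g' hr.1),
        ← add_assoc, ← hf.2.1 s ⟨hs.1, le_rfl⟩, hfg]
      exact hg.eq_add_integral hs.1 h.le ht.2
  · have hsq : (fun t => (mnorm m (NBodyHJ.concat s f' g' t)) ^ 2)
        = NBodyHJ.concat s (fun t => (mnorm m (f' t)) ^ 2) (fun t => (mnorm m (g' t)) ^ 2) := by
      funext t
      unfold NBodyHJ.concat
      split_ifs <;> rfl
    rw [hsq]
    exact integrableOn_concat hf.2.2.2 hg.2.2.2 hs

/-- The Lagrangian cost is additive under concatenation. -/
theorem lagCost_concat (m : Fin N → ℝ) {s T : ℝ} (hs : s ∈ Set.Icc 1 T)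
    (f f' g g' : ℝ → Conf d N) :
    lagCost m T (concat s f g) (concat s f' g') = lagCost m s f f'
      + ∫⁻ t in Set.Ioc s T, (ENNReal.ofReal ((mnorm m (g' t)) ^ 2 / 2) + Upot m (g t)) := by
  unfold lagCost
  rw [← Set.Ioc_union_Ioc_eq_Ioc hs.1 hs.2,
    lintegral_union measurableSet_Ioc (Set.Ioc_disjoint_Ioc_of_le le_rfl)]
  congr 1
  · refine setLIntegral_congr_fun measurableSet_Ioc fun t ht => ?_
    simp only [concat_of_le _ _ ht.2]
  · refine setLIntegral_congr_fun measurableSet_Ioc fun t ht => ?_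
    simp only [concat_of_lt _ _ ht.1]

theorem minner_sub_left (m : Fin N → ℝ) (x y z : Conf d N) :
    minner m (x - y) z = minner m x z - minner m y z := by
  simp only [minner, Pi.sub_apply, inner_sub_left, mul_sub, Finset.sum_sub_distrib]

theorem coe_add_sub_eq_sub_add_sub (a b : ℝ≥0∞) (p q : ℝ) :
    ((a + b : ℝ≥0∞) : EReal) - (p : EReal)
      = (a : EReal) - (q : EReal) + (b : EReal) - ((p - q : ℝ) : EReal) := by
  have hpq : (-q) + (-(p - q)) = -p := by ring
  simp only [sub_eq_add_neg (G := EReal), ← EReal.coe_neg, EReal.coe_ennreal_add]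
  rw [← hpq, EReal.coe_add]
  abel

/-- **Dynamic programming inequality** : if `γ̄ ∈ H¹([1,T]; X)` ends at `x` at time `T`,
`T' ∈ [1, T]`, and `γ̃ ∈ H¹([1,T']; X)` with `γ̃(T') = γ̄(T')` attains the infimum defining
`u(T', γ̄(T'))`, then
`u(T,x) ≤ u(T', γ̄(T')) + ∫_{T'}^T L(γ̄, γ̄') dt − ⟨ṙ₀(T) − ṙ₀(T'), γ̃(1)⟩_M`. -/
theorem dynamic_programming_inequality {d N : ℕ} (hd : 2 ≤ d) (hN : 2 ≤ N)
    (m : Fin N → ℝ) (hm : ∀ i, 0 < m i)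
    (r0 r0' : ℝ → Conf d N)
    (hr0X : ∀ t : ℝ, 1 ≤ t → inX m (r0 t))
    (hr0deriv : ∀ t : ℝ, 1 ≤ t → HasDerivAt r0 (r0' t) t)
    (hr0cont : ContinuousOn r0' (Set.Ici 1))
    (T : ℝ) (hT : 1 < T) (x : Conf d N) (hx : inX m x)
    (γb γb' : ℝ → Conf d N) (hγb : InH1 m 1 T γb γb') (hγbT : γb T = x)
    (T' : ℝ) (hT' : T' ∈ Set.Icc 1 T)
    (γt γt' : ℝ → Conf d N) (hγt : InH1 m 1 T' γt γt') (hγtT' : γt T' = γb T')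
    (hγtmin : ((lagCost m T' γt γt' : ℝ≥0∞) : EReal)
        - ((minner m (r0' T') (γt 1) : ℝ) : EReal) = uVal m r0' T' (γb T')) :
    uVal m r0' T x ≤
      uVal m r0' T' (γb T')
        + ((∫⁻ t in Set.Ioc T' T,
              (ENNReal.ofReal ((mnorm m (γb' t)) ^ 2 / 2) + Upot m (γb t)) : ℝ≥0∞) : EReal)
        - ((minner m (r0' T - r0' T') (γt 1) : ℝ) : EReal) := by
  have hle : uVal m r0' T x ≤
      ((lagCost m T (concat T' γt γb) (concat T' γt' γb') : ℝ≥0∞) : EReal)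
        - ((minner m (r0' T) (concat T' γt γb 1) : ℝ) : EReal) := by
    refine iInf₂_le_of_le _ _ (iInf_le _ ⟨hγt.concat hγb hT' hγtT', ?_⟩)
    rcases hT'.2.lt_or_eq with h | rfl
    · rw [concat_of_lt γt γb h, hγbT]
    · rw [concat_of_le γt γb le_rfl, hγtT', hγbT]
  rwa [lagCost_concat m hT', concat_of_le γt γb hT'.1,
    coe_add_sub_eq_sub_add_sub _ _ _ (minner m (r0' T') (γt 1)), hγtmin,
    ← minner_sub_left] at hle

end NBodyHJ
end
end

section
/- Hessian bound at minimal central configurations: let b_m ∈ X with ‖b_m‖_M = 1 be a minimal central configuration. Then for every λ > 0 and every ψ ∈ X, ⟨∇²U(λ b_m) ψ, ψ⟩ ≥ −U(b_m) ‖ψ‖_M² / λ³, where ∇²U denotes the Hessian of U at the collision-free configuration λ b_m. In particular, with β = (9 U(b_m)/2)^{1/3}, one has ⟨∇²U(β b_m t^{2/3}) ψ, ψ⟩ ≥ −(2/9) ‖ψ‖_M²/t² for every t > 0 and ψ ∈ X. -/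
open MeasureTheory Real Set Filter Topology
open scoped RealInnerProductSpace ENNReal

noncomputable section
namespace NBodyHJ

attribute [local instance] Classical.propDecidable

variable {d N : ℕ}

/-- `bm` is a normalized minimal central configuration : it lies in `X`, is collision-free,
has unit mass norm, and minimizes the Newtonian potential over the inertia ellipsoid
`E = {x ∈ X : ⟨x,x⟩_M = 1}` (whence it is a critical point of `U` restricted to `E`). -/
def IsMinCentral (m : Fin N → ℝ) (bm : Conf d N) : Prop :=
  inX m bm ∧ ¬ collision bm ∧ minner m bm bm = 1 ∧
    ∀ y : Conf d N, inX m y → ¬ collision y → minner m y y = 1 → U m bm ≤ U m y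

/-- `β = (9 U(b_m)/2)^{1/3}`. -/
def beta (m : Fin N → ℝ) (bm : Conf d N) : ℝ := (9 * U m bm / 2) ^ ((1:ℝ)/3)

/-- The parabolic reference path `r₀(t) = β b_m t^{2/3}`. -/
def parR0 (m : Fin N → ℝ) (bm : Conf d N) (t : ℝ) : Conf d N :=
  (beta m bm * t ^ ((2:ℝ)/3)) • bm

/-- The second derivative `r̈₀(t) = −(2/9) β b_m t^{−4/3}` of the parabolic reference path. -/
def parR0'' (m : Fin N → ℝ) (bm : Conf d N) (t : ℝ) : Conf d N :=
  (beta m bm * (-(2:ℝ)/9) * t ^ (-(4:ℝ)/3)) • bm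

/-- The motion `γ(t) = φ(t) + r₀(t) + x − β b_m` associated with `φ` in the parabolic case. -/
def parCurve (m : Fin N → ℝ) (bm x : Conf d N) (φ : ℝ → Conf d N) (t : ℝ) : Conf d N :=
  φ t + parR0 m bm t + x - beta m bm • bm

/-- The integrand of the parabolic renormalized Lagrangian action. -/
def parIntegrand (m : Fin N → ℝ) (bm x : Conf d N) (φ φ' : ℝ → Conf d N) (t : ℝ) : ℝ :=
  (mnorm m (φ' t)) ^ 2 / 2 + U m (parCurve m bm x φ t) - U m (parR0 m bm t)
    - minner m (parR0'' m bm t) (φ t)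

/-- The parabolic renormalized Lagrangian action `A_{x,[1,T]}(φ)`, with values in
`ℝ ∪ {+∞}` : it equals the integral of the renormalized Lagrangian if this integrand is
integrable and the motion is a.e. collision-free, and `+∞` otherwise. -/
def parAction (m : Fin N → ℝ) (bm x : Conf d N) (T : EReal) (φ φ' : ℝ → Conf d N) : EReal :=
  if IntegrableOn (parIntegrand m bm x φ φ') (timeSet 1 T) ∧
      (∀ᵐ t ∂volume.restrict (timeSet 1 T), ¬ collision (parCurve m bm x φ t))
  then ((∫ t in timeSet 1 T, parIntegrand m bm x φ φ' t : ℝ) : EReal)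
  else (⊤ : EReal)

/-- The infimum of the parabolic renormalized action over `D₀^{1,2}(1,T)`. -/
def parInf (m : Fin N → ℝ) (bm x : Conf d N) (T : EReal) : EReal :=
  ⨅ (φ : ℝ → Conf d N) (φ' : ℝ → Conf d N) (_ : InD m 1 T φ φ'), parAction m bm x T φ φ'

/-- The renormalized value function `v(x)` in the parabolic case. -/
def parValue (m : Fin N → ℝ) (bm x : Conf d N) : ℝ := (parInf m bm x ⊤).toReal

/-- The Hessian quadratic form `⟨∇²U(q) ψ, ψ⟩`, expressed as the second derivative of
`s ↦ U(q + s ψ)` at `s = 0`. -/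
def hessQ (m : Fin N → ℝ) (q ψ : Conf d N) : ℝ :=
  iteratedDeriv 2 (fun s : ℝ => U m (q + s • ψ)) 0

/-- The second derivative is nonnegative at a local minimum. -/
lemma iteratedDeriv_two_nonneg_of_isLocalMin {f : ℝ → ℝ} {x : ℝ} (hmin : IsLocalMin f x)
    (hc : ContinuousAt f x) : 0 ≤ iteratedDeriv 2 f x := by
  rw [iteratedDeriv_succ, iteratedDeriv_one]
  by_contra! hneg
  have hmax := isLocalMax_of_deriv_deriv_neg hneg hmin.deriv_eq_zero hc
  have hconst : f =ᶠ[𝓝 x] fun _ => f x := by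
    filter_upwards [hmin, hmax] with y h₁ h₂ using le_antisymm h₂ h₁
  rw [hconst.deriv.deriv_eq] at hneg
  simp at hneg

/-- A quadratic polynomial touching a `C²` function from below has the smaller second
derivative at the contact point. -/
lemma two_mul_le_iteratedDeriv_two_of_eventually_le {f : ℝ → ℝ} (hf : ContDiffAt ℝ 2 f 0)
    (b c : ℝ) (h : ∀ᶠ s in 𝓝 (0 : ℝ), f 0 + b * s + c * s ^ 2 ≤ f s) :
    2 * c ≤ iteratedDeriv 2 f 0 := by
  set q : ℝ → ℝ := fun s => f 0 + b * s + c * s ^ 2 with hq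
  have hqd : ContDiff ℝ 2 q := by fun_prop
  have hq2 : iteratedDeriv 2 q 0 = 2 * c := by
    have h₁ : deriv q = fun s => b + c * (2 * s) := by
      funext s
      have h' : HasDerivAt q (b * 1 + c * ((2 : ℕ) * s ^ (2 - 1) * 1)) s :=
        (((hasDerivAt_id s).const_mul b).const_add (f 0)).add
          (((hasDerivAt_id s).pow 2).const_mul c)
      simpa only [mul_one, Nat.cast_ofNat, Nat.add_one_sub_one, pow_one] using h'.deriv
    have h₂ : HasDerivAt (fun s : ℝ => b + c * (2 * s)) (c * (2 * 1)) 0 :=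
      (((hasDerivAt_id (0 : ℝ)).const_mul 2).const_mul c).const_add b
    rw [iteratedDeriv_succ, iteratedDeriv_one, h₁, h₂.deriv]
    ring
  have hmin : IsLocalMin (f - q) 0 := by
    filter_upwards [h] with s hs
    simpa [hq] using hs
  have := iteratedDeriv_two_nonneg_of_isLocalMin hmin
    (hf.continuousAt.sub hqd.continuous.continuousAt)
  rw [iteratedDeriv_sub hf hqd.contDiffAt, hq2] at this
  linarith

lemma U_smul (m : Fin N → ℝ) {c : ℝ} (hc : 0 < c) (x : Conf d N) :
    U m (c • x) = U m x / c := by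
  simp only [U, Finset.sum_div]
  refine Finset.sum_congr rfl fun i _ => Finset.sum_congr rfl fun j _ => ?_
  split_ifs
  · rw [Pi.smul_apply, Pi.smul_apply, ← smul_sub, norm_smul, Real.norm_of_nonneg hc.le,
      mul_comm c, div_mul_eq_div_div]
  · simp

lemma inX_smul {m : Fin N → ℝ} {x : Conf d N} (hx : inX m x) (c : ℝ) : inX m (c • x) := by
  unfold inX at *
  simp only [Pi.smul_apply, smul_comm _ c, ← Finset.smul_sum, hx, smul_zero]

lemma inX_add {m : Fin N → ℝ} {x y : Conf d N} (hx : inX m x) (hy : inX m y) :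
    inX m (x + y) := by
  unfold inX at *
  simp only [Pi.add_apply, smul_add, Finset.sum_add_distrib, hx, hy, add_zero]

lemma not_collision_smul {x : Conf d N} (hx : ¬ collision x) {c : ℝ} (hc : c ≠ 0) :
    ¬ collision (c • x) := by
  rintro ⟨i, j, hij, h⟩
  exact hx ⟨i, j, hij, smul_right_injective _ hc h⟩

lemma minner_smul_smul (m : Fin N → ℝ) (c : ℝ) (x : Conf d N) :
    minner m (c • x) (c • x) = c ^ 2 * minner m x x := by
  simp only [minner, Finset.mul_sum, Pi.smul_apply, real_inner_smul_left, real_inner_smul_right]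
  exact Finset.sum_congr rfl fun i _ => by ring

lemma minner_add_smul_self (m : Fin N → ℝ) (x y : Conf d N) (s : ℝ) :
    minner m (x + s • y) (x + s • y) =
      minner m x x + 2 * minner m x y * s + minner m y y * s ^ 2 := by
  simp only [minner, Finset.mul_sum, Finset.sum_mul, ← Finset.sum_add_distrib, Pi.add_apply,
    Pi.smul_apply]
  refine Finset.sum_congr rfl fun i _ => ?_
  rw [real_inner_add_add_self]
  simp only [real_inner_smul_left, real_inner_smul_right]
  ring

lemma minner_self_nonneg {m : Fin N → ℝ} (hm : ∀ i, 0 < m i) (x : Conf d N) :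
    0 ≤ minner m x x :=
  Finset.sum_nonneg fun i _ => mul_nonneg (hm i).le real_inner_self_nonneg

lemma minner_self_pos (hN : 2 ≤ N) {m : Fin N → ℝ} (hm : ∀ i, 0 < m i) {x : Conf d N}
    (hx : ¬ collision x) : 0 < minner m x x := by
  refine (minner_self_nonneg hm x).lt_of_ne fun h => hx ?_
  have hzero : ∀ i, x i = 0 := fun i => by
    have := (Finset.sum_eq_zero_iff_of_nonneg fun i _ =>
      mul_nonneg (hm i).le real_inner_self_nonneg).1 h.symm i (Finset.mem_univ i)
    simpa [(hm i).ne'] using this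
  exact ⟨⟨0, by omega⟩, ⟨1, by omega⟩, by simp, by rw [hzero, hzero]⟩

lemma U_pos (hN : 2 ≤ N) {m : Fin N → ℝ} (hm : ∀ i, 0 < m i) {x : Conf d N}
    (hx : ¬ collision x) : 0 < U m x := by
  have hterm : ∀ i j : Fin N, 0 ≤ if i < j then m i * m j / ‖x i - x j‖ else 0 := fun i j => by
    have := (hm i).le
    have := (hm j).le
    split_ifs <;> positivity
  let i₀ : Fin N := ⟨0, by omega⟩
  let i₁ : Fin N := ⟨1, by omega⟩
  have hlt : i₀ < i₁ := by simp [i₀, i₁]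
  refine Finset.sum_pos' (fun i _ => Finset.sum_nonneg fun j _ => hterm i j)
    ⟨i₀, Finset.mem_univ _, Finset.sum_pos' (fun j _ => hterm i₀ j) ⟨i₁, Finset.mem_univ _, ?_⟩⟩
  rw [if_pos hlt]
  have hne : x i₀ - x i₁ ≠ 0 := sub_ne_zero.2 fun h => hx ⟨i₀, i₁, hlt.ne, h⟩
  exact div_pos (mul_pos (hm _) (hm _)) (norm_pos_iff.2 hne)

/-- The scale-invariant form of minimality: `U(b_m) ≤ ‖y‖_M U(y)`. -/
lemma IsMinCentral.U_le_mnorm_mul_U (hN : 2 ≤ N) {m : Fin N → ℝ} (hm : ∀ i, 0 < m i)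
    {bm : Conf d N} (hbm : IsMinCentral m bm) {y : Conf d N} (hy : inX m y)
    (hyc : ¬ collision y) : U m bm ≤ mnorm m y * U m y := by
  have hpos := minner_self_pos hN hm hyc
  have hn : 0 < mnorm m y := Real.sqrt_pos.2 hpos
  have hsq : mnorm m y ^ 2 = minner m y y := Real.sq_sqrt hpos.le
  have := hbm.2.2.2 ((mnorm m y)⁻¹ • y) (inX_smul hy _)
    (not_collision_smul hyc (inv_ne_zero hn.ne'))
    (by rw [minner_smul_smul, ← hsq]; field_simp)
  rwa [U_smul m (inv_pos.2 hn), div_inv_eq_mul, mul_comm] at this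

/-- The tangent line to `u ↦ u^{-1/2}` at `u = l²`, evaluated at `u = n²`. -/
lemma inv_sub_le_inv {l n : ℝ} (hl : 0 < l) (hn : 0 < n) :
    1 / l - (n ^ 2 - l ^ 2) / (2 * l ^ 3) ≤ 1 / n := by
  have key : 1 / n - (1 / l - (n ^ 2 - l ^ 2) / (2 * l ^ 3)) =
      (n - l) ^ 2 * (n + 2 * l) / (2 * l ^ 3 * n) := by
    field_simp
    ring
  have : 0 ≤ (n - l) ^ 2 * (n + 2 * l) / (2 * l ^ 3 * n) := by positivity
  linarith

lemma eventually_not_collision {q : Conf d N} (hq : ¬ collision q) (ψ : Conf d N) :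
    ∀ᶠ s in 𝓝 (0 : ℝ), ¬ collision (q + s • ψ) := by
  have : ∀ i j : Fin N, ∀ᶠ s in 𝓝 (0 : ℝ), i ≠ j → (q + s • ψ) i ≠ (q + s • ψ) j := fun i j => by
    by_cases hij : i = j
    · simp [hij]
    have hcont : ∀ k, ContinuousAt (fun s : ℝ => (q + s • ψ) k) 0 := fun k => by
      simp only [Pi.add_apply, Pi.smul_apply]
      fun_prop
    have hne : (q + (0 : ℝ) • ψ) i ≠ (q + (0 : ℝ) • ψ) j := by
      simpa using fun h => hq ⟨i, j, hij, h⟩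
    filter_upwards [(hcont i).ne_iff_eventually_ne (hcont j) |>.1 hne] with s hs _ using hs
  filter_upwards [eventually_all.2 fun i => eventually_all.2 (this i)] with s hs
  rintro ⟨i, j, hij, h⟩
  exact hs i j hij h

lemma contDiffAt_U_line (m : Fin N → ℝ) {q : Conf d N} (hq : ¬ collision q) (ψ : Conf d N) :
    ContDiffAt ℝ 2 (fun s : ℝ => U m (q + s • ψ)) 0 := by
  unfold U
  refine ContDiffAt.sum fun i _ => ContDiffAt.sum fun j _ => ?_
  split_ifs with hij
  · have hne : (q + (0 : ℝ) • ψ) i - (q + (0 : ℝ) • ψ) j ≠ 0 := by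
      simpa [sub_eq_zero] using fun h => hq ⟨i, j, hij.ne, h⟩
    refine contDiffAt_const.div (ContDiffAt.norm ℝ ?_ hne) (norm_ne_zero_iff.2 hne)
    simp only [Pi.add_apply, Pi.smul_apply]
    fun_prop
  · exact contDiffAt_const

lemma IsMinCentral.neg_le_hessQ (hN : 2 ≤ N) {m : Fin N → ℝ} (hm : ∀ i, 0 < m i)
    {bm : Conf d N} (hbm : IsMinCentral m bm) {lam : ℝ} (hlam : 0 < lam) {ψ : Conf d N}
    (hψ : inX m ψ) : -(U m bm * (mnorm m ψ) ^ 2 / lam ^ 3) ≤ hessQ m (lam • bm) ψ := by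
  have hq : ¬ collision (lam • bm) := not_collision_smul hbm.2.1 hlam.ne'
  have hψsq : mnorm m ψ ^ 2 = minner m ψ ψ := Real.sq_sqrt (minner_self_nonneg hm ψ)
  have h := two_mul_le_iteratedDeriv_two_of_eventually_le (contDiffAt_U_line m hq ψ)
    (-(U m bm * minner m (lam • bm) ψ / lam ^ 3)) (-(U m bm * minner m ψ ψ / (2 * lam ^ 3))) ?_
  · refine le_of_eq_of_le ?_ h
    rw [hψsq]
    field_simp
  · filter_upwards [eventually_not_collision hq ψ] with s hs
    set y := lam • bm + s • ψ with hy
    have hpos := minner_self_pos hN hm hs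
    have hn : 0 < mnorm m y := Real.sqrt_pos.2 hpos
    have hsq : mnorm m y ^ 2 =
        lam ^ 2 + 2 * minner m (lam • bm) ψ * s + minner m ψ ψ * s ^ 2 := by
      rw [mnorm, Real.sq_sqrt hpos.le, hy, minner_add_smul_self, minner_smul_smul, hbm.2.2.1,
        mul_one]
    have hle := hbm.U_le_mnorm_mul_U hN hm (inX_add (inX_smul hbm.1 lam) (inX_smul hψ s)) hs
    calc _ = U m bm * (1 / lam - (mnorm m y ^ 2 - lam ^ 2) / (2 * lam ^ 3)) := by
          rw [hsq, zero_smul, add_zero, U_smul m hlam]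
          field_simp
          ring
      _ ≤ U m bm * (1 / mnorm m y) :=
          mul_le_mul_of_nonneg_left (inv_sub_le_inv hlam hn) (U_pos hN hm hbm.2.1).le
      _ ≤ U m y := by
          rw [mul_one_div, div_le_iff₀ hn, mul_comm]
          exact hle

/-- **Hessian bound at minimal central configurations** : if `b_m ∈ X`, `‖b_m‖_M = 1`, is a
minimal central configuration, then for every `λ > 0` and `ψ ∈ X`,
`⟨∇²U(λ b_m) ψ, ψ⟩ ≥ −U(b_m) ‖ψ‖_M² / λ³`; in particular, with `β = (9U(b_m)/2)^{1/3}`,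
`⟨∇²U(β b_m t^{2/3}) ψ, ψ⟩ ≥ −(2/9) ‖ψ‖_M²/t²` for every `t > 0`. -/
theorem hessian_bound_minimal_central {d N : ℕ} (hd : 2 ≤ d) (hN : 2 ≤ N)
    (m : Fin N → ℝ) (hm : ∀ i, 0 < m i)
    (bm : Conf d N) (hbm : IsMinCentral m bm) :
    (∀ lam : ℝ, 0 < lam → ∀ ψ : Conf d N, inX m ψ →
      -(U m bm * (mnorm m ψ) ^ 2 / lam ^ 3) ≤ hessQ m (lam • bm) ψ) ∧
    (∀ t : ℝ, 0 < t → ∀ ψ : Conf d N, inX m ψ →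
      -((2 / 9) * (mnorm m ψ) ^ 2 / t ^ 2) ≤
        hessQ m ((beta m bm * t ^ ((2:ℝ)/3)) • bm) ψ) := by
  refine ⟨fun lam hlam ψ hψ => hbm.neg_le_hessQ hN hm hlam hψ, fun t ht ψ hψ => ?_⟩
  have hU := U_pos hN hm hbm.2.1
  have hβ : 0 < beta m bm := Real.rpow_pos_of_pos (by positivity) _
  have hβ3 : beta m bm ^ 3 = 9 * U m bm / 2 := by
    rw [beta, ← Real.rpow_natCast, ← Real.rpow_mul (by positivity)]
    norm_num
  have ht3 : (t ^ ((2 : ℝ) / 3)) ^ 3 = t ^ 2 := by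
    rw [← Real.rpow_natCast, ← Real.rpow_mul ht.le]
    norm_num
  refine le_of_eq_of_le ?_
    (hbm.neg_le_hessQ hN hm (mul_pos hβ (Real.rpow_pos_of_pos ht _)) hψ)
  rw [mul_pow, hβ3, ht3]
  field_simp

end NBodyHJ
end
end

section
/- Coercivity of the tail Hessian form along hyperbolically expanding curves: let c > 0 and let γ = (γ_1, …, γ_N) : [1, +∞) → Ω be a continuous curve such that |γ_i(t) − γ_j(t)| ≥ c t for all t ≥ 1 and all 1 ≤ i < j ≤ N. Then there exist T_0 ≥ 1 and α > 0 such that for every ψ ∈ D_0^{1,2}(T_0, +∞), ∫_{T_0}^∞ [ ‖ψ̇(t)‖_M² + ⟨∇²U(γ(t)) ψ(t), ψ(t)⟩ ] dt ≥ α ∫_{T_0}^∞ ‖ψ̇(t)‖_M² dt, where ∇²U denotes the Hessian of U. -/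
open MeasureTheory Real Set Filter Topology
open scoped RealInnerProductSpace ENNReal

noncomputable section
namespace NBodyHJ

attribute [local instance] Classical.propDecidable

variable {d N : ℕ}

/-- The derivative of `s ↦ ‖r + s v‖⁻¹` away from collisions. -/
theorem hasDerivAt_inv_norm_line {E : Type*} [NormedAddCommGroup E] [InnerProductSpace ℝ E]
    (r v : E) (s : ℝ) (h : r + s • v ≠ 0) :
    HasDerivAt (fun s : ℝ => ‖r + s • v‖⁻¹) (-⟪r + s • v, v⟫ / ‖r + s • v‖ ^ 3) s := by
  have hl : HasDerivAt (fun s : ℝ => r + s • v) v s := by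
    simpa using ((hasDerivAt_id s).smul_const v).const_add r
  have hpos : 0 < ‖r + s • v‖ := norm_pos_iff.mpr h
  have hsq := hl.norm_sq.sqrt (by positivity)
  simp only [Real.sqrt_sq (norm_nonneg _)] at hsq
  refine (hsq.inv hpos.ne').congr_deriv ?_
  field_simp

/-- The second derivative of `s ↦ ‖r + s v‖⁻¹` at a noncollision point. -/
theorem hasDerivAt_deriv_inv_norm_line {E : Type*} [NormedAddCommGroup E]
    [InnerProductSpace ℝ E] (r v : E) (h : r ≠ 0) :
    HasDerivAt (fun s : ℝ => -⟪r + s • v, v⟫ / ‖r + s • v‖ ^ 3)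
      (3 * ⟪r, v⟫ ^ 2 / ‖r‖ ^ 5 - ‖v‖ ^ 2 / ‖r‖ ^ 3) 0 := by
  have hl : HasDerivAt (fun s : ℝ => r + s • v) v 0 := by
    simpa using ((hasDerivAt_id (0 : ℝ)).smul_const v).const_add r
  have hi := hasDerivAt_inv_norm_line r v 0 (by simpa using h)
  have hn := (hl.inner ℝ (hasDerivAt_const (0 : ℝ) v)).neg
  have hpos : 0 < ‖r‖ := norm_pos_iff.mpr h
  have hmul := hn.mul (hi.pow 3)
  refine (hmul.congr_of_eventuallyEq (Eventually.of_forall fun s => ?_)).congr_deriv ?_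
  · simp [div_eq_mul_inv]
  · simp only [zero_smul, add_zero, inner_zero_right, zero_add, real_inner_self_eq_norm_sq,
      Pi.neg_apply, Pi.pow_apply, Nat.reduceSub, inv_pow]
    field_simp
    ring

/-- The explicit Newtonian Hessian quadratic form. -/
theorem hessQ_eq_sum (m : Fin N → ℝ) (q ψ : Conf d N) (hq : ∀ i j, i ≠ j → q i - q j ≠ 0) :
    hessQ m q ψ = ∑ i : Fin N, ∑ j : Fin N, if i < j then
      m i * m j * (3 * ⟪q i - q j, ψ i - ψ j⟫ ^ 2 / ‖q i - q j‖ ^ 5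
        - ‖ψ i - ψ j‖ ^ 2 / ‖q i - q j‖ ^ 3) else 0 := by
  have hline : ∀ (s : ℝ) (i j : Fin N), (q + s • ψ) i - (q + s • ψ) j
      = (q i - q j) + s • (ψ i - ψ j) := by
    intro s i j
    simp only [Pi.add_apply, Pi.smul_apply, smul_sub]
    abel
  have hev : ∀ᶠ s : ℝ in 𝓝 0, ∀ i j : Fin N, i ≠ j → (q i - q j) + s • (ψ i - ψ j) ≠ 0 := by
    simp only [eventually_all]
    intro i j hij
    have hcont : ContinuousAt (fun s : ℝ => (q i - q j) + s • (ψ i - ψ j)) 0 := by fun_prop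
    exact hcont.eventually_ne (by simpa using hq i j hij)
  have hderiv : deriv (fun s : ℝ => U m (q + s • ψ)) =ᶠ[𝓝 0]
      fun s => ∑ i : Fin N, ∑ j : Fin N, if i < j then
        m i * m j * (-⟪(q i - q j) + s • (ψ i - ψ j), ψ i - ψ j⟫ /
          ‖(q i - q j) + s • (ψ i - ψ j)‖ ^ 3) else 0 := by
    filter_upwards [hev] with s hs
    apply HasDerivAt.deriv
    simp only [U, hline]
    refine HasDerivAt.fun_sum fun i _ => HasDerivAt.fun_sum fun j _ => ?_
    split_ifs with hij
    · simp only [div_eq_mul_inv (m i * m j)]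
      exact (hasDerivAt_inv_norm_line _ _ s (hs i j hij.ne)).const_mul _
    · exact hasDerivAt_const _ _
  rw [hessQ, iteratedDeriv_succ, iteratedDeriv_one, hderiv.deriv_eq]
  apply HasDerivAt.deriv
  refine HasDerivAt.fun_sum fun i _ => HasDerivAt.fun_sum fun j _ => ?_
  split_ifs with hij
  · exact (hasDerivAt_deriv_inv_norm_line _ _ (hq i j hij.ne)).const_mul _
  · exact hasDerivAt_const _ _

/-- The Hessian form is bounded by the inverse cube of the minimal mutual distance. -/
theorem abs_hessQ_le (m : Fin N → ℝ) (hm : ∀ i, 0 < m i) (q ψ : Conf d N) {δ : ℝ} (hδ : 0 < δ)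
    (hq : ∀ i j, i ≠ j → δ ≤ ‖q i - q j‖) :
    |hessQ m q ψ| ≤ 16 * (∑ i, m i) ^ 2 * ‖ψ‖ ^ 2 / δ ^ 3 := by
  rw [hessQ_eq_sum m q ψ fun i j hij => norm_pos_iff.mp (hδ.trans_le (hq i j hij))]
  have hterm : ∀ i j : Fin N, |if i < j then
      m i * m j * (3 * ⟪q i - q j, ψ i - ψ j⟫ ^ 2 / ‖q i - q j‖ ^ 5
        - ‖ψ i - ψ j‖ ^ 2 / ‖q i - q j‖ ^ 3) else 0| ≤
      m i * m j * (16 * ‖ψ‖ ^ 2 / δ ^ 3) := by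
    intro i j
    have hmm : 0 < m i * m j := mul_pos (hm i) (hm j)
    split_ifs with hij
    · rw [abs_mul, abs_of_pos hmm]
      refine mul_le_mul_of_nonneg_left ?_ hmm.le
      have hr : 0 < ‖q i - q j‖ := hδ.trans_le (hq i j hij.ne)
      have hv : ‖ψ i - ψ j‖ ≤ 2 * ‖ψ‖ := by
        linarith [norm_sub_le (ψ i) (ψ j), norm_le_pi_norm ψ i, norm_le_pi_norm ψ j]
      have hinner : ⟪q i - q j, ψ i - ψ j⟫ ^ 2 ≤ ‖q i - q j‖ ^ 2 * ‖ψ i - ψ j‖ ^ 2 := by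
        rw [← mul_pow, ← sq_abs]
        gcongr
        exact abs_real_inner_le_norm _ _
      have hfirst : 3 * ⟪q i - q j, ψ i - ψ j⟫ ^ 2 / ‖q i - q j‖ ^ 5 ≤
          3 * (‖ψ i - ψ j‖ ^ 2 / ‖q i - q j‖ ^ 3) := by
        calc _ ≤ 3 * (‖q i - q j‖ ^ 2 * ‖ψ i - ψ j‖ ^ 2) / ‖q i - q j‖ ^ 5 := by gcongr
          _ = _ := by field_simp
      have hsecond : ‖ψ i - ψ j‖ ^ 2 / ‖q i - q j‖ ^ 3 ≤ (2 * ‖ψ‖) ^ 2 / δ ^ 3 := by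
        gcongr
        exact hq i j hij.ne
      have h1 : 0 ≤ 3 * ⟪q i - q j, ψ i - ψ j⟫ ^ 2 / ‖q i - q j‖ ^ 5 := by positivity
      have h2 : 0 ≤ ‖ψ i - ψ j‖ ^ 2 / ‖q i - q j‖ ^ 3 := by positivity
      have h3 : 16 * ‖ψ‖ ^ 2 / δ ^ 3 = 4 * ((2 * ‖ψ‖) ^ 2 / δ ^ 3) := by ring
      rw [h3, abs_le]
      constructor <;> linarith
    · rw [abs_zero]
      positivity
  calc _ ≤ ∑ i : Fin N, ∑ j : Fin N, m i * m j * (16 * ‖ψ‖ ^ 2 / δ ^ 3) :=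
        (Finset.abs_sum_le_sum_abs _ _).trans <| Finset.sum_le_sum fun i _ =>
          (Finset.abs_sum_le_sum_abs _ _).trans <| Finset.sum_le_sum fun j _ => hterm i j
    _ = _ := by
        simp only [← Finset.sum_mul, ← Finset.mul_sum]
        ring

/-- The Hessian form depends continuously on the base point and the direction. -/
theorem continuousOn_hessQ (m : Fin N → ℝ) {s : Set ℝ} {γ ψ : ℝ → Conf d N}
    (hγ : ContinuousOn γ s) (hψ : ContinuousOn ψ s)
    (hq : ∀ t ∈ s, ∀ i j, i ≠ j → γ t i - γ t j ≠ 0) :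
    ContinuousOn (fun t => hessQ m (γ t) (ψ t)) s := by
  refine ContinuousOn.congr ?_ fun t ht => hessQ_eq_sum m (γ t) (ψ t) (hq t ht)
  refine continuousOn_finsetSum _ fun i _ => continuousOn_finsetSum _ fun j _ => ?_
  split_ifs with hij
  · have hγi : ∀ i, ContinuousOn (fun t => γ t i) s := fun i => continuousOn_pi.mp hγ i
    have hψi : ∀ i, ContinuousOn (fun t => ψ t i) s := fun i => continuousOn_pi.mp hψ i
    have hr := (hγi i).sub (hγi j)
    have hv := (hψi i).sub (hψi j)
    have hne : ∀ (n : ℕ), ∀ t ∈ s, ‖γ t i - γ t j‖ ^ n ≠ 0 := fun n t ht =>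
      pow_ne_zero _ (norm_ne_zero_iff.mpr (hq t ht i j hij.ne))
    exact continuousOn_const.mul
      (((continuousOn_const.mul ((hr.inner hv).pow 2)).div (hr.norm.pow 5) (hne 5)).sub
        ((hv.norm.pow 2).div (hr.norm.pow 3) (hne 3)))
  · exact continuousOn_const

/-- The square of the mass norm is the kinetic quadratic form. -/
theorem mnorm_sq_eq_sum (m : Fin N → ℝ) (hm : ∀ i, 0 < m i) (x : Conf d N) :
    mnorm m x ^ 2 = ∑ i, m i * ‖x i‖ ^ 2 := by
  have h : minner m x x = ∑ i, m i * ‖x i‖ ^ 2 := by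
    simp only [minner, real_inner_self_eq_norm_sq]
  rw [mnorm, h, Real.sq_sqrt]
  exact Finset.sum_nonneg fun i _ => mul_nonneg (hm i).le (sq_nonneg _)

/-- The sup norm is controlled by the mass norm. -/
theorem norm_sq_le_mnorm_sq (m : Fin N → ℝ) (hm : ∀ i, 0 < m i) (x : Conf d N) :
    ‖x‖ ^ 2 ≤ (∑ i, (m i)⁻¹) * mnorm m x ^ 2 := by
  have hinv : ∀ i, 0 ≤ (m i)⁻¹ := fun i => (inv_pos.mpr (hm i)).le
  have hC : 0 ≤ ∑ i, (m i)⁻¹ := Finset.sum_nonneg fun i _ => hinv i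
  refine (Real.le_sqrt (norm_nonneg x) (by positivity)).mp
    ((pi_norm_le_iff_of_nonneg (Real.sqrt_nonneg _)).mpr fun i => Real.le_sqrt_of_sq_le ?_)
  have h1 : m i * ‖x i‖ ^ 2 ≤ mnorm m x ^ 2 := by
    rw [mnorm_sq_eq_sum m hm]
    exact Finset.single_le_sum (f := fun i => m i * ‖x i‖ ^ 2)
      (fun i _ => mul_nonneg (hm i).le (sq_nonneg _)) (Finset.mem_univ i)
  calc ‖x i‖ ^ 2 = (m i)⁻¹ * (m i * ‖x i‖ ^ 2) := by
        rw [inv_mul_cancel_left₀ (hm i).ne']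
    _ ≤ _ := mul_le_mul (Finset.single_le_sum (f := fun i => (m i)⁻¹) (fun i _ => hinv i)
        (Finset.mem_univ i)) h1 (mul_nonneg (hm i).le (sq_nonneg _)) hC

/-- Cauchy–Schwarz against the constant function on a bounded interval. -/
theorem sq_setIntegral_Ioc_le {f : ℝ → ℝ} {a b : ℝ} (hab : a < b)
    (hf : IntegrableOn f (Ioc a b)) (hf2 : IntegrableOn (fun t => f t ^ 2) (Ioc a b)) :
    (∫ t in Ioc a b, f t) ^ 2 ≤ (b - a) * ∫ t in Ioc a b, f t ^ 2 := by
  have hL : 0 < b - a := sub_pos.mpr hab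
  set I := ∫ t in Ioc a b, f t with hI
  have hnonneg : 0 ≤ ∫ t in Ioc a b, ((b - a) * f t - I) ^ 2 :=
    integral_nonneg fun t => sq_nonneg _
  have hexp : ∫ t in Ioc a b, ((b - a) * f t - I) ^ 2 =
      (b - a) ^ 2 * (∫ t in Ioc a b, f t ^ 2) - 2 * (b - a) * I * I + (b - a) * I ^ 2 := by
    have hpt : ∀ t, ((b - a) * f t - I) ^ 2 =
        ((b - a) ^ 2 * f t ^ 2 - 2 * (b - a) * I * f t) + I ^ 2 := fun t => by ring
    simp only [hpt]
    have hc : IntegrableOn (fun _ : ℝ => I ^ 2) (Ioc a b) := by simp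
    have hd : IntegrableOn
        (fun t => (b - a) ^ 2 * f t ^ 2 - 2 * (b - a) * I * f t) (Ioc a b) :=
      (hf2.const_mul _).sub (hf.const_mul _)
    rw [integral_add hd hc,
      integral_sub (hf2.const_mul _) (hf.const_mul _), integral_const_mul, integral_const_mul,
      ← hI]
    simp [hab.le]
  rw [hexp] at hnonneg
  have : 0 ≤ (b - a) * ((b - a) * (∫ t in Ioc a b, f t ^ 2) - I ^ 2) := by nlinarith
  linarith [nonneg_of_mul_nonneg_right this hL]

theorem timeSet_top (t0 : ℝ) : timeSet t0 ⊤ = Ioi t0 := by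
  ext t
  simp [timeSet]

/-- Curves of finite energy starting at `0` grow at most like the square root of time. -/
theorem InD.norm_sq_le (m : Fin N → ℝ) (hm : ∀ i, 0 < m i) {T0 : ℝ} {ψ ψ' : ℝ → Conf d N}
    (h : InD m T0 ⊤ ψ ψ') {t : ℝ} (ht : T0 < t) :
    ‖ψ t‖ ^ 2 ≤ (t - T0) * ((∑ i, (m i)⁻¹) * ∫ s in Ioi T0, mnorm m (ψ' s) ^ 2) := by
  obtain ⟨-, -, hprim, hloc, hen⟩ := h
  rw [timeSet_top] at hen
  have hψ' := hloc t ht.le (EReal.coe_lt_top t)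
  have hsub : Ioc T0 t ⊆ Ioi T0 := fun s hs => hs.1
  have hen' := hen.mono_set hsub
  have hsq : IntegrableOn (fun s => ‖ψ' s‖ ^ 2) (Ioc T0 t) := by
    refine Integrable.mono' (hen'.const_mul (∑ i, (m i)⁻¹))
      (hψ'.aestronglyMeasurable.norm.pow 2) (Eventually.of_forall fun s => ?_)
    rw [Real.norm_of_nonneg (sq_nonneg _)]
    exact norm_sq_le_mnorm_sq m hm _
  have hL : 0 ≤ t - T0 := (sub_pos.mpr ht).le
  have hC : 0 ≤ ∑ i, (m i)⁻¹ := Finset.sum_nonneg fun i _ => (inv_pos.mpr (hm i)).le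
  calc ‖ψ t‖ ^ 2 ≤ (∫ s in Ioc T0 t, ‖ψ' s‖) ^ 2 := by
        rw [hprim t ht.le (EReal.coe_lt_top t)]
        gcongr
        exact norm_integral_le_integral_norm _
    _ ≤ (t - T0) * ∫ s in Ioc T0 t, ‖ψ' s‖ ^ 2 := sq_setIntegral_Ioc_le ht hψ'.norm hsq
    _ ≤ (t - T0) * ∫ s in Ioc T0 t, (∑ i, (m i)⁻¹) * mnorm m (ψ' s) ^ 2 := by
        refine mul_le_mul_of_nonneg_left ?_ hL
        exact integral_mono hsq (hen'.const_mul _) fun s => norm_sq_le_mnorm_sq m hm _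
    _ ≤ _ := by
        rw [integral_const_mul]
        refine mul_le_mul_of_nonneg_left (mul_le_mul_of_nonneg_left ?_ hC) hL
        exact setIntegral_mono_set hen (Eventually.of_forall fun s => sq_nonneg _)
          hsub.eventuallyLE

/-- Curves in `D₀^{1,2}(T₀, +∞)` are continuous. -/
theorem InD.continuousOn (m : Fin N → ℝ) {T0 : ℝ} {ψ ψ' : ℝ → Conf d N}
    (h : InD m T0 ⊤ ψ ψ') : ContinuousOn ψ (Ioi T0) := by
  obtain ⟨-, -, hprim, hloc, -⟩ := h
  intro t ht
  have ht' : T0 < t := ht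
  have hI : IntegrableOn ψ' (Icc T0 (t + 1)) :=
    (integrableOn_Icc_iff_integrableOn_Ioc).mpr (hloc (t + 1) (by linarith) (EReal.coe_lt_top _))
  have hcont := (intervalIntegral.continuousOn_primitive hI).congr
    fun s hs => hprim s hs.1 (EReal.coe_lt_top s)
  exact (hcont.continuousAt (Icc_mem_nhds ht' (by linarith))).continuousWithinAt

/-- **Coercivity of the tail Hessian form along hyperbolically expanding curves** : if
`γ : [1, +∞) → Ω` is continuous with `|γ_i(t) − γ_j(t)| ≥ c t` for all pairs `i < j` and
all `t ≥ 1`, then there are `T₀ ≥ 1` and `α > 0` such that for every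
`ψ ∈ D₀^{1,2}(T₀, +∞)`,
`∫_{T₀}^∞ [ ‖ψ̇‖_M² + ⟨∇²U(γ(t)) ψ(t), ψ(t)⟩ ] dt ≥ α ∫_{T₀}^∞ ‖ψ̇‖_M² dt`. -/
theorem tail_hessian_coercive {d N : ℕ} (hd : 2 ≤ d) (hN : 2 ≤ N)
    (m : Fin N → ℝ) (hm : ∀ i, 0 < m i)
    (c : ℝ) (hc : 0 < c)
    (γ : ℝ → Conf d N) (hγcont : ContinuousOn γ (Set.Ici 1))
    (hγΩ : ∀ t : ℝ, 1 ≤ t → inOmega m (γ t))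
    (hγsep : ∀ t : ℝ, 1 ≤ t → ∀ i j : Fin N, i ≠ j → c * t ≤ ‖γ t i - γ t j‖) :
    ∃ T0 : ℝ, 1 ≤ T0 ∧ ∃ α > (0:ℝ), ∀ ψ ψ' : ℝ → Conf d N, InD m T0 ⊤ ψ ψ' →
      α * ∫ t in Set.Ioi T0, (mnorm m (ψ' t)) ^ 2 ≤
        ∫ t in Set.Ioi T0, ((mnorm m (ψ' t)) ^ 2 + hessQ m (γ t) (ψ t)) := by
  set K : ℝ := 16 * (∑ i, m i) ^ 2 * (∑ i, (m i)⁻¹) / c ^ 3 with hK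
  have hinv : 0 ≤ ∑ i, (m i)⁻¹ := Finset.sum_nonneg fun i _ => (inv_pos.mpr (hm i)).le
  have hK0 : 0 ≤ K := by positivity
  refine ⟨1 + 2 * K, by linarith, 1 / 2, by norm_num, fun ψ ψ' hψ => ?_⟩
  set T0 : ℝ := 1 + 2 * K with hT0
  have hT0pos : 0 < T0 := by positivity
  have hT0one : 1 ≤ T0 := by linarith
  have hen : IntegrableOn (fun t => mnorm m (ψ' t) ^ 2) (Ioi T0) := by
    rw [← timeSet_top]
    exact hψ.2.2.2.2
  set E : ℝ := ∫ t in Ioi T0, mnorm m (ψ' t) ^ 2 with hE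
  have hE0 : 0 ≤ E := integral_nonneg fun t => sq_nonneg _
  have hbound : ∀ t ∈ Ioi T0, |hessQ m (γ t) (ψ t)| ≤ K * E * t ^ (-2 : ℝ) := by
    intro t ht
    have hTt : T0 < t := ht
    have htpos : 0 < t := hT0pos.trans hTt
    have hgrow : ‖ψ t‖ ^ 2 ≤ t * ((∑ i, (m i)⁻¹) * E) :=
      (hψ.norm_sq_le m hm hTt).trans
        (mul_le_mul_of_nonneg_right (by linarith) (by positivity))
    calc |hessQ m (γ t) (ψ t)| ≤ 16 * (∑ i, m i) ^ 2 * ‖ψ t‖ ^ 2 / (c * t) ^ 3 :=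
          abs_hessQ_le m hm _ _ (mul_pos hc htpos) (hγsep t (hT0one.trans hTt.le))
      _ ≤ 16 * (∑ i, m i) ^ 2 * (t * ((∑ i, (m i)⁻¹) * E)) / (c * t) ^ 3 := by gcongr
      _ = K * E * t ^ (-2 : ℝ) := by
          rw [hK, Real.rpow_neg htpos.le, Real.rpow_two]
          field_simp
  have hdom : IntegrableOn (fun t : ℝ => K * E * t ^ (-2 : ℝ)) (Ioi T0) :=
    (integrableOn_Ioi_rpow_of_lt (by norm_num) hT0pos).const_mul _
  have hdom_int : ∫ t in Ioi T0, K * E * t ^ (-2 : ℝ) = K * E / T0 := by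
    rw [integral_const_mul, integral_Ioi_rpow_of_lt (by norm_num) hT0pos]
    norm_num [Real.rpow_neg_one]
    rfl
  have hhess : IntegrableOn (fun t => hessQ m (γ t) (ψ t)) (Ioi T0) := by
    refine Integrable.mono' hdom ?_ ?_
    · refine (continuousOn_hessQ m
        (hγcont.mono fun t ht => hT0one.trans (le_of_lt (mem_Ioi.mp ht))) (hψ.continuousOn m)
        fun t ht i j hij => ?_).aestronglyMeasurable measurableSet_Ioi
      have ht1 : 1 ≤ t := hT0one.trans (le_of_lt (mem_Ioi.mp ht))
      exact norm_pos_iff.mp ((by positivity : 0 < c * t).trans_le (hγsep t ht1 i j hij))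
    · exact (ae_restrict_iff' measurableSet_Ioi).mpr (Eventually.of_forall hbound)
  have hlower : -(K * E / T0) ≤ ∫ t in Ioi T0, hessQ m (γ t) (ψ t) := by
    rw [← hdom_int, ← integral_neg]
    exact setIntegral_mono_on hdom.neg hhess measurableSet_Ioi
      fun t ht => (abs_le.mp (hbound t ht)).1
  have hsmall : K * E / T0 ≤ E / 2 := by
    rw [div_le_div_iff₀ hT0pos two_pos]
    nlinarith
  rw [integral_add hen hhess]
  linarith

end NBodyHJ
end
end
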